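/- Let P be a partially ordered set with a greatest element ⊤. Let M be the set of elements of P that are maximal below ⊤ and suppose Φ ∈ P is a greatest lower bound of M. If Φ is the least upper bound of some set A ⊆ P all of whose elements are very weakly ⊤-compact, then Φ is the least upper bound of the set of all non-generators of P. -/

import Mathlib

def NonGenerator {P : Type*} [PartialOrder P] [OrderTop P] (a : P) : Prop :=
  ∀ e : P, (¬ ∃ p : P, p < ⊤ ∧ a ≤ p ∧ e ≤ p) → e = ⊤

def MaximalBelowTop {P : Type*} [PartialOrder P] [OrderTop P] (p : P) : Prop :=
  p < ⊤ ∧ ¬ ∃ q : P, p < q ∧ q < ⊤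

def UnboundedBelowTopChain {P : Type*} [PartialOrder P] [OrderTop P] (C : Set P) : Prop :=
  C.Nonempty ∧ IsChain (· ≤ ·) C ∧ (∀ c ∈ C, c < ⊤) ∧
    ¬ ∃ p : P, p < ⊤ ∧ ∀ c ∈ C, c ≤ p

def VeryWeaklyTopCompact {P : Type*} [PartialOrder P] [OrderTop P] (a : P) : Prop :=
  ∀ C : Set P, UnboundedBelowTopChain C →
    (∀ c ∈ C, ¬ ∃ p : P, MaximalBelowTop p ∧ c ≤ p) →
    ∃ c ∈ C, ∃ r : P, r < ⊤ ∧ c ≤ r ∧ a ≤ r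

/-!
If `e < ⊤` lies below no element maximal below `⊤`, Zorn's lemma fails above `e`: some chain of
elements above `e` is unbounded below `⊤`. Very weak `⊤`-compactness of `a`, applied to this chain,
gives an `r < ⊤` above both `a` and `e`. If instead `e ≤ p` with `p` maximal below `⊤`, then `p`
itself bounds `a` and `e`, as soon as `a` lies below all such `p`. So a very weakly `⊤`-compact
element below every maximal one is a non-generator. Conversely every non-generator lies below
every maximal element.
-/

section

variable {P : Type*} [PartialOrder P] [OrderTop P] {a e p : P}

theorem nonGenerator_iff_forall_lt_top :
    NonGenerator a ↔ ∀ e < ⊤, ∃ p < ⊤, a ≤ p ∧ e ≤ p := by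
  simp only [NonGenerator, lt_top_iff_ne_top, not_imp_comm, ne_eq]

theorem NonGenerator.le_of_maximalBelowTop (ha : NonGenerator a) (hp : MaximalBelowTop p) :
    a ≤ p := by
  obtain ⟨q, hq, haq, hpq⟩ := nonGenerator_iff_forall_lt_top.1 ha p hp.1
  have p_eq_q : p = q := hpq.eq_of_not_lt fun hlt ↦ hp.2 ⟨q, hlt, hq⟩
  exact p_eq_q ▸ haq

theorem maximalBelowTop_of_maximal (hp : Maximal (fun x ↦ x < ⊤ ∧ e ≤ x) p) :
    MaximalBelowTop p :=
  ⟨hp.prop.1, fun ⟨_, hpq, hq⟩ ↦ hp.not_prop_of_gt hpq ⟨hq, hp.prop.2.trans hpq.le⟩⟩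

theorem exists_maximalBelowTop_or_unboundedBelowTopChain (he : e < ⊤) :
    (∃ p, MaximalBelowTop p ∧ e ≤ p) ∨ ∃ C, UnboundedBelowTopChain C ∧ ∀ c ∈ C, e ≤ c := by
  refine or_iff_not_imp_right.2 fun no_chain ↦ ?_
  have bounded : ∀ C ⊆ {x | x < ⊤ ∧ e ≤ x}, IsChain (· ≤ ·) C → ∀ y ∈ C,
      ∃ ub ∈ {x | x < ⊤ ∧ e ≤ x}, ∀ z ∈ C, z ≤ ub := by
    intro C hC chain y hy
    by_contra no_ub
    refine no_chain ⟨C, ⟨⟨y, hy⟩, chain, fun c hc ↦ (hC hc).1, ?_⟩, fun c hc ↦ (hC hc).2⟩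
    rintro ⟨ub, hub, le_ub⟩
    exact no_ub ⟨ub, ⟨hub, (hC hy).2.trans (le_ub y hy)⟩, le_ub⟩
  obtain ⟨p, hep, hp⟩ := zorn_le_nonempty₀ _ bounded e ⟨he, le_rfl⟩
  exact ⟨p, maximalBelowTop_of_maximal hp, hep⟩

theorem VeryWeaklyTopCompact.exists_lt_top_of_not_le_maximal (ha : VeryWeaklyTopCompact a)
    (he : e < ⊤) (not_le_maximal : ¬ ∃ p, MaximalBelowTop p ∧ e ≤ p) :
    ∃ r < ⊤, a ≤ r ∧ e ≤ r := by
  obtain ⟨C, hC, e_le⟩ :=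
    (exists_maximalBelowTop_or_unboundedBelowTopChain he).resolve_left not_le_maximal
  obtain ⟨c, hc, r, hr, hcr, har⟩ :=
    ha C hC fun c hc ⟨p, hp, hcp⟩ ↦ not_le_maximal ⟨p, hp, (e_le c hc).trans hcp⟩
  exact ⟨r, hr, har, (e_le c hc).trans hcr⟩

theorem VeryWeaklyTopCompact.nonGenerator (ha : VeryWeaklyTopCompact a)
    (le_maximal : ∀ p, MaximalBelowTop p → a ≤ p) : NonGenerator a := by
  refine nonGenerator_iff_forall_lt_top.2 fun e he ↦ ?_
  by_cases h : ∃ p, MaximalBelowTop p ∧ e ≤ p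
  · obtain ⟨p, hp, hep⟩ := h
    exact ⟨p, hp.1, le_maximal p hp, hep⟩
  · exact ha.exists_lt_top_of_not_le_maximal he h

end

theorem stmt_11 {P : Type*} [PartialOrder P] [OrderTop P] (Φ : P) (A : Set P)
    (hΦ : IsGLB {p : P | MaximalBelowTop p} Φ)
    (hA : ∀ a ∈ A, VeryWeaklyTopCompact a)
    (hlub : IsLUB A Φ) :
    IsLUB {x : P | NonGenerator x} Φ := by
  have nonGenerator_of_mem : ∀ a ∈ A, NonGenerator a := fun a ha ↦
    (hA a ha).nonGenerator fun _ hp ↦ (hlub.1 ha).trans (hΦ.1 hp)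
  constructor
  · exact fun x hx ↦ hΦ.2 fun _ hp ↦ hx.le_of_maximalBelowTop hp
  · exact fun b hb ↦ hlub.2 fun a ha ↦ hb (nonGenerator_of_mem a ha)
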